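/- Let n ≥ 1 be an integer and let p be a real number with 1 < p ≤ 1 + 2/n. Then there is no function u : ℝⁿ × [0,∞) → ℝ such that u is continuous on ℝⁿ × [0,∞), twice continuously differentiable in x and once in t on ℝⁿ × (0,∞), u ≥ 0 everywhere, u satisfies Δu − ∂ₜu + u^p = 0 on ℝⁿ × (0,∞), and the initial value u₀(x) := u(x,0) is nonnegative and not identically zero. (This is the Euclidean specialization of part (a) of the main theorem: on ℝⁿ the volume of balls is V(r) = ωₙrⁿ, and ∫^∞ t/V(t)^{p−1} dt = ∞ holds exactly when p ≤ 1 + 2/n.) -/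

import Mathlib

open MeasureTheory Real Set

/-- The Laplacian of `f : ℝⁿ → ℝ` at `x`, defined as the trace of the second derivative. -/
noncomputable def laplacian {n : ℕ} (f : EuclideanSpace ℝ (Fin n) → ℝ)
    (x : EuclideanSpace ℝ (Fin n)) : ℝ :=
  ∑ i : Fin n, iteratedFDeriv ℝ 2 f x ![EuclideanSpace.single i 1, EuclideanSpace.single i 1]

/-!
Let `α = 1 / (p - 1)`, the scaling exponent of the equation, and suppose `u x₀ 0 > 0`. The condition
`n (p - 1) ≤ 2` says `n / 2 ≤ α`, so `t^(-α) exp (-|x - x₀|² / 4t)` is a subsolution of the heat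
equation whose `p`-th power is of the order of its time derivative. Even in the critical case
`n / 2 = α` the source `u^p` therefore feeds its amplitude at a rate `1 / t`, and comparison shows
that `u` stays above a Gaussian of amplitude `η + b log t`. Since the amplitude is unbounded, at a
late time `T` the solution lies above a self-similar subsolution of positivity radius `∼ √T` that
blows up at time `2T`, which contradicts its being finite there.
-/

open Filter Topology Module
open scoped Laplacian

section SecondDerivativeTest

theorem deriv_deriv_nonneg_of_isLocalMin {f : ℝ → ℝ} {a : ℝ} (h : IsLocalMin f a)
    (hf : ContinuousAt f a) : 0 ≤ deriv (deriv f) a := by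
  by_contra! hneg
  have hmax : IsLocalMax f a := isLocalMax_of_deriv_deriv_neg hneg h.deriv_eq_zero hf
  have hconst : f =ᶠ[𝓝 a] fun _ => f a := by
    filter_upwards [h, hmax] with x hmin hmax using le_antisymm hmax hmin
  have hzero : deriv (deriv f) a = 0 := by simpa using hconst.deriv.deriv_eq
  exact hneg.ne hzero

theorem deriv_nonpos_of_isMinOn_Icc {f : ℝ → ℝ} {a b d : ℝ} (hab : a < b)
    (hf : HasDerivAt f d b) (h : IsMinOn f (Icc a b) b) : d ≤ 0 := by
  have hcone : a - b ∈ posTangentConeAt (Icc a b) b :=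
    sub_mem_posTangentConeAt_of_segment_subset (by rw [segment_symm, segment_eq_Icc hab.le])
  have hnonneg : 0 ≤ (a - b) * d := by
    simpa using h.localize.hasFDerivWithinAt_nonneg hf.hasFDerivAt.hasFDerivWithinAt hcone
  exact nonpos_of_mul_nonneg_right hnonneg (sub_neg.2 hab)

theorem iteratedFDeriv_two_apply_self {E F : Type*} [NormedAddCommGroup E] [NormedSpace ℝ E]
    [NormedAddCommGroup F] [NormedSpace ℝ F] {f : E → F} {x : E} (hf : ContDiffAt ℝ 2 f x) (v : E) :
    iteratedFDeriv ℝ 2 f x ![v, v] = deriv (deriv fun τ : ℝ => f (x + τ • v)) 0 := by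
  have hline (τ : ℝ) : HasDerivAt (fun τ : ℝ => x + τ • v) v τ := by
    simpa using ((hasDerivAt_id τ).smul_const v).const_add x
  have hx : Tendsto (fun τ : ℝ => x + τ • v) (𝓝 0) (𝓝 x) := by
    simpa using (hline 0).continuousAt.tendsto
  have hfirst : (deriv fun τ : ℝ => f (x + τ • v)) =ᶠ[𝓝 0]
      fun τ => fderiv ℝ f (x + τ • v) v := by
    filter_upwards [hx.eventually (hf.eventually (by simp))] with τ hτ
    exact ((hτ.differentiableAt (by simp)).hasFDerivAt.comp_hasDerivAt τ (hline τ)).deriv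
  have hsecond :
      HasDerivAt (fun τ : ℝ => fderiv ℝ f (x + τ • v)) (fderiv ℝ (fderiv ℝ f) x v) 0 := by
    have hd := (hf.fderiv_right (m := 1) (by norm_num)).differentiableAt (by simp)
    exact hd.hasFDerivAt.comp_hasDerivAt_of_eq 0 (hline 0) (by simp)
  rw [iteratedFDeriv_two_apply, hfirst.deriv_eq, (hsecond.clm_apply (hasDerivAt_const 0 v)).deriv]
  simp

end SecondDerivativeTest

section Laplacian

variable {E : Type*} [NormedAddCommGroup E] [InnerProductSpace ℝ E] [FiniteDimensional ℝ E]

theorem laplacian_nonneg_of_isLocalMin {f : E → ℝ} {x : E} (h : IsLocalMin f x)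
    (hf : ContDiffAt ℝ 2 f x) : 0 ≤ (Δ f) x := by
  rw [InnerProductSpace.laplacian_eq_iteratedFDeriv_stdOrthonormalBasis]
  refine Finset.sum_nonneg fun i _ => ?_
  set v := stdOrthonormalBasis ℝ E i
  rw [iteratedFDeriv_two_apply_self hf]
  have hline : ContinuousAt (fun τ : ℝ => x + τ • v) 0 := by fun_prop
  have hx : x + (0 : ℝ) • v = x := by simp
  refine deriv_deriv_nonneg_of_isLocalMin ?_ ?_
  · exact IsLocalMin.comp_continuous (g := fun τ : ℝ => x + τ • v) (by rwa [hx]) hline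
  · exact ContinuousAt.comp (g := f) (by rw [hx]; exact hf.continuousAt) hline

theorem laplacian_comp_norm_sub_sq_div {ψ ψ' ψ'' : ℝ → ℝ} (hψ : ∀ q, HasDerivAt ψ (ψ' q) q)
    (hψ' : ∀ q, HasDerivAt ψ' (ψ'' q) q) (x₀ x : E) (t : ℝ) :
    (Δ fun y => ψ (‖y - x₀‖ ^ 2 / t)) x =
      (4 * (‖x - x₀‖ ^ 2 / t) * ψ'' (‖x - x₀‖ ^ 2 / t) +
        2 * finrank ℝ E * ψ' (‖x - x₀‖ ^ 2 / t)) / t := by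
  have hq (y : E) :
      HasFDerivAt (fun y => ‖y - x₀‖ ^ 2 / t) ((2 / t) • innerSL ℝ (y - x₀)) y := by
    have := ((hasFDerivAt_id y).sub_const x₀).norm_sq.mul_const t⁻¹
    refine (this.congr_fderiv ?_).congr_of_eventuallyEq ?_
    · ext v
      simp only [id_eq, map_sub, ContinuousLinearMap.comp_id, smul_apply, sub_apply,
        coe_innerSL_apply, nsmul_eq_mul, Nat.cast_ofNat, smul_eq_mul]
      ring
    · simp [div_eq_mul_inv]
  have hfirst : fderiv ℝ (fun y => ψ (‖y - x₀‖ ^ 2 / t)) =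
      fun y => ψ' (‖y - x₀‖ ^ 2 / t) • (2 / t) • innerSL ℝ (y - x₀) :=
    funext fun y => ((hψ _).comp_hasFDerivAt y (hq y)).fderiv
  have hinner : HasFDerivAt (fun y => (2 / t) • innerSL ℝ (y - x₀))
      ((2 / t) • (innerSL ℝ : E →L[ℝ] E →L[ℝ] ℝ)) x :=
    ((innerSL ℝ).hasFDerivAt.comp x ((hasFDerivAt_id x).sub_const x₀)).const_smul (2 / t)
  have hsecond : fderiv ℝ (fun y => ψ' (‖y - x₀‖ ^ 2 / t) • (2 / t) • innerSL ℝ (y - x₀)) x = _ :=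
    (((hψ' _).comp_hasFDerivAt x (hq x)).smul hinner).fderiv
  rw [InnerProductSpace.laplacian_eq_iteratedFDeriv_stdOrthonormalBasis]
  have hterm (v : E) : iteratedFDeriv ℝ 2 (fun y => ψ (‖y - x₀‖ ^ 2 / t)) x ![v, v] =
      4 / t ^ 2 * ψ'' (‖x - x₀‖ ^ 2 / t) * inner ℝ (x - x₀) v ^ 2 +
        2 / t * ψ' (‖x - x₀‖ ^ 2 / t) * ‖v‖ ^ 2 := by
    rw [iteratedFDeriv_two_apply, hfirst, hsecond]
    have hself : (innerSL ℝ : E →L[ℝ] E →L[ℝ] ℝ) v v = ‖v‖ ^ 2 := real_inner_self_eq_norm_sq v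
    simp only [Function.comp_apply, map_sub, Fin.isValue, Matrix.cons_val_zero,
      Matrix.cons_val_one, Matrix.cons_val_fin_one, add_apply, smul_apply, sub_apply,
      ContinuousLinearMap.smulRight_apply, coe_innerSL_apply, smul_eq_mul, hself, inner_sub_left]
    ring
  simp only [hterm, Finset.sum_add_distrib, ← Finset.mul_sum, OrthonormalBasis.sum_sq_inner_left,
    OrthonormalBasis.norm_eq_one, one_pow, Finset.sum_const, Finset.card_univ, Fintype.card_fin,
    nsmul_eq_mul, mul_one]
  ring

theorem laplacian_eq_innerProductSpace_laplacian {n : ℕ} (f : EuclideanSpace ℝ (Fin n) → ℝ) :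
    laplacian f = Δ f := by
  ext x
  simp [InnerProductSpace.laplacian_eq_iteratedFDeriv_orthonormalBasis f
    (EuclideanSpace.basisFun (Fin n) ℝ), laplacian]

end Laplacian

section Comparison

theorem exists_first_zero {X : Type*} [TopologicalSpace X] [T2Space X] {v : X → ℝ → ℝ}
    {a b : ℝ} {C : Set X} (hv : ContinuousOn (fun q : X × ℝ => v q.1 q.2) (univ ×ˢ Icc a b))
    (hC : IsCompact C) (hvC : ∀ t ∈ Icc a b, ∀ x, v x t ≤ 0 → x ∈ C) (ha : ∀ x, 0 < v x a)
    (hex : ∃ t ∈ Icc a b, ∃ x, v x t ≤ 0) :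
    ∃ t ∈ Ioc a b, ∃ x, v x t = 0 ∧ ∀ r ∈ Icc a t, ∀ y, 0 ≤ v y r := by
  set Z : Set (X × ℝ) := (C ×ˢ Icc a b) ∩ (fun q => v q.1 q.2) ⁻¹' Iic 0
  have hZ : IsCompact Z :=
    (hC.prod isCompact_Icc).of_isClosed_subset
      ((hv.mono (prod_mono_left (subset_univ C))).preimage_isClosed_of_isClosed
        (hC.isClosed.prod isClosed_Icc) isClosed_Iic) inter_subset_left
  have hmem {t : ℝ} (ht : t ∈ Icc a b) {x : X} (hx : v x t ≤ 0) : (x, t) ∈ Z :=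
    ⟨⟨hvC t ht x hx, ht⟩, hx⟩
  obtain ⟨t₁, ht₁, x₁, hx₁⟩ := hex
  obtain ⟨⟨x, t⟩, ⟨⟨-, ht⟩, hxt⟩, hmin⟩ :=
    hZ.exists_isMinOn ⟨_, hmem ht₁ hx₁⟩ continuous_snd.continuousOn
  have hat : a < t := ht.1.lt_of_ne fun h : a = t => (h ▸ ha x).not_ge hxt
  have hbefore (y : X) : ∀ r ∈ Ico a t, 0 ≤ v y r := by
    intro r hr
    by_contra! hneg
    have htr : t ≤ r := hmin (hmem ⟨hr.1, hr.2.le.trans ht.2⟩ hneg.le)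
    exact hr.2.not_ge htr
  have hupto (y : X) : ∀ r ∈ Icc a t, 0 ≤ v y r := by
    rw [← closure_Ico hat.ne]
    refine le_on_closure (hbefore y) continuousOn_const ?_
    rw [closure_Ico hat.ne]
    exact hv.comp (f := fun r => (y, r)) (by fun_prop)
      fun r hr => ⟨mem_univ y, hr.1, hr.2.trans ht.2⟩
  have hzero : v x t = 0 := le_antisymm hxt (hupto x t ⟨hat.le, le_rfl⟩)
  exact ⟨t, ⟨hat, ht.2⟩, x, hzero, fun r hr y => hupto y r hr⟩

variable {E : Type*} [NormedAddCommGroup E] [InnerProductSpace ℝ E] [FiniteDimensional ℝ E]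

/-- `u` is a nonnegative classical supersolution of `Δu - ∂ₜu + u^p = 0` on `E × (0,∞)`, continuous
up to time `0`. -/
structure IsNonnegSupersolution (p : ℝ) (u : E → ℝ → ℝ) : Prop where
  continuousOn : ContinuousOn (fun q : E × ℝ => u q.1 q.2) {q | 0 ≤ q.2}
  contDiff_space : ∀ t, 0 < t → ContDiff ℝ 2 fun x => u x t
  differentiableAt_time : ∀ x t, 0 < t → DifferentiableAt ℝ (u x) t
  nonneg : ∀ x t, 0 ≤ t → 0 ≤ u x t
  laplacian_add_rpow_le_deriv : ∀ x t, 0 < t → (Δ fun y => u y t) x + u x t ^ p ≤ deriv (u x) t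

theorem IsNonnegSupersolution.of_laplacian_sub_deriv_add_rpow_eq_zero {p : ℝ} {u : E → ℝ → ℝ}
    (hcont : ContinuousOn (fun q : E × ℝ => u q.1 q.2) {q | 0 ≤ q.2})
    (hspace : ∀ t, 0 < t → ContDiff ℝ 2 fun x => u x t)
    (htime : ∀ x, DifferentiableOn ℝ (u x) (Ioi 0)) (hnonneg : ∀ x t, 0 ≤ t → 0 ≤ u x t)
    (heq : ∀ x t, 0 < t → (Δ fun y => u y t) x - deriv (u x) t + u x t ^ p = 0) :
    IsNonnegSupersolution p u where
  continuousOn := hcont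
  contDiff_space := hspace
  differentiableAt_time x _ ht := (htime x).differentiableAt (Ioi_mem_nhds ht)
  nonneg := hnonneg
  laplacian_add_rpow_le_deriv x t ht := by linarith [heq x t ht]

/-- `w` is a barrier on the time interval `[a, b]`: a strict classical subsolution of
`Δw - ∂ₜw + w^p = 0` where it is nonnegative, which happens only in a bounded region. Where `w` is
negative nothing is required, so that a barrier need not be truncated. -/
structure IsBarrier (p a b : ℝ) (w : E → ℝ → ℝ) : Prop where
  continuousOn : ContinuousOn (fun q : E × ℝ => w q.1 q.2) (univ ×ˢ Icc a b)
  contDiff_space : ∀ t ∈ Icc a b, ContDiff ℝ 2 fun x => w x t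
  differentiableAt_time : ∀ t ∈ Icc a b, ∀ x, DifferentiableAt ℝ (w x) t
  isBounded : Bornology.IsBounded {x | ∃ t ∈ Icc a b, 0 ≤ w x t}
  deriv_lt_laplacian_add_rpow : ∀ t ∈ Icc a b, ∀ x, 0 ≤ w x t →
    deriv (w x) t < (Δ fun y => w y t) x + w x t ^ p

theorem IsNonnegSupersolution.barrier_lt {p a b : ℝ} {u w : E → ℝ → ℝ}
    (hu : IsNonnegSupersolution p u) (hw : IsBarrier p a b w) (ha : 0 < a)
    (hinit : ∀ x, w x a < u x a) : ∀ t ∈ Icc a b, ∀ x, w x t < u x t := by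
  by_contra! hcross
  obtain ⟨t, ht, x, hzero, hnonneg⟩ :
      ∃ t ∈ Ioc a b, ∃ x, u x t - w x t = 0 ∧ ∀ r ∈ Icc a t, ∀ y, 0 ≤ u y r - w y r := by
    refine exists_first_zero (v := fun x t => u x t - w x t) ?_
      hw.isBounded.isCompact_closure ?_ ?_ ?_
    · exact (hu.continuousOn.mono fun q hq => ha.le.trans hq.2.1).sub hw.continuousOn
    · exact fun t ht x hx => subset_closure
        ⟨t, ht, (hu.nonneg x t (ha.le.trans ht.1)).trans (sub_nonpos.1 hx)⟩
    · exact fun x => sub_pos.2 (hinit x)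
    · simpa only [sub_nonpos] using hcross
  have ht0 : 0 < t := ha.trans ht.1
  have hmem : t ∈ Icc a b := Ioc_subset_Icc_self ht
  have htouch : u x t = w x t := sub_eq_zero.1 hzero
  have hlaplacian : 0 ≤ (Δ fun y => u y t) x - (Δ fun y => w y t) x := by
    have hux := (hu.contDiff_space t ht0).contDiffAt (x := x)
    have hwx := (hw.contDiff_space t hmem).contDiffAt (x := x)
    rw [← hux.laplacian_sub hwx]
    refine laplacian_nonneg_of_isLocalMin (.of_forall fun y => ?_) (hux.sub hwx)
    simpa [hzero] using hnonneg t ⟨ht.1.le, le_rfl⟩ y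
  have htime : deriv (u x) t - deriv (w x) t ≤ 0 := by
    refine deriv_nonpos_of_isMinOn_Icc ht.1 ((hu.differentiableAt_time x t ht0).hasDerivAt.sub
      (hw.differentiableAt_time t hmem x).hasDerivAt) fun r hr => ?_
    simpa [hzero] using hnonneg r hr x
  have hsuper := hu.laplacian_add_rpow_le_deriv x t ht0
  have hsub := hw.deriv_lt_laplacian_add_rpow t hmem x (htouch ▸ hu.nonneg x t ht0.le)
  rw [htouch] at hsuper
  linarith

end Comparison

section Blowup

theorem rpow_neg_rpow_eq_div {α p d : ℝ} (hα : α * (p - 1) = 1) (hd : 0 < d) :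
    (d ^ (-α)) ^ p = d ^ (-α) / d := by
  rw [← rpow_mul hd.le, ← rpow_sub_one hd.ne']
  congr 1
  linarith

theorem add_one_mul_le_rpow_add {α p y : ℝ} (hp : 1 < p) (hα : α * (p - 1) = 1) (hy : 0 ≤ y) :
    (α + 1) * y ≤ y ^ p + (α + 1) ^ α := by
  have hα0 : 0 < α := pos_of_mul_pos_left (one_pos.trans_eq hα.symm) (sub_pos.2 hp).le
  have hconj : p.HolderConjugate (α + 1) := by
    rw [holderConjugate_iff_eq_conjExponent hp, eq_div_iff (sub_pos.2 hp).ne']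
    linarith
  have hyp : 0 ≤ y ^ p := by positivity
  calc (α + 1) * y = y * (α + 1) := mul_comm _ _
    _ ≤ y ^ p / p + (α + 1) ^ (α + 1) / (α + 1) :=
      young_inequality_of_nonneg hy (by positivity) hconj
    _ ≤ y ^ p + (α + 1) ^ α := by
      rw [← rpow_sub_one (by positivity), add_sub_cancel_right]
      gcongr
      exact div_le_self hyp hp.le

variable {E : Type*} [NormedAddCommGroup E]

theorem isBounded_setOf_norm_sub_sq_le (x₀ : E) (R : ℝ) :
    Bornology.IsBounded {x | ‖x - x₀‖ ^ 2 ≤ R} :=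
  (Metric.isBounded_closedBall (x := x₀) (r := √R)).subset fun x hx => by
    simpa [dist_eq_norm] using Real.le_sqrt_of_sq_le hx

/-- The backward self-similar comparison function `d^(-α) (K - |x - x₀|² / d)`, `d = S - t`, which
blows up at `(x₀, S)`; the scaling exponent is `α = 1 / (p - 1)`. -/
noncomputable def blowupBarrier (α K S : ℝ) (x₀ x : E) (t : ℝ) : ℝ :=
  (S - t) ^ (-α) * (K - ‖x - x₀‖ ^ 2 / (S - t))

theorem hasDerivAt_blowupBarrier (α K : ℝ) {S t : ℝ} (x₀ x : E) (ht : t < S) :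
    HasDerivAt (blowupBarrier α K S x₀ x)
      ((S - t) ^ (-α) / (S - t) * (α * K - (α + 1) * (‖x - x₀‖ ^ 2 / (S - t)))) t := by
  have hd : S - t ≠ 0 := (sub_pos.2 ht).ne'
  have hsub : HasDerivAt (fun t => S - t) (-1) t := by simpa using (hasDerivAt_id t).const_sub S
  have hpow := hsub.rpow_const (p := -α) (.inl hd)
  refine (hpow.mul ((hsub.fun_inv hd).const_mul (‖x - x₀‖ ^ 2) |>.const_sub K)).congr_deriv ?_
  rw [rpow_sub_one hd]
  field_simp
  ring

variable [InnerProductSpace ℝ E] [FiniteDimensional ℝ E]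

theorem laplacian_blowupBarrier (α K S t : ℝ) (x₀ x : E) :
    (Δ fun y => blowupBarrier α K S x₀ y t) x =
      -(2 * finrank ℝ E * ((S - t) ^ (-α) / (S - t))) := by
  have hψ (q : ℝ) : HasDerivAt (fun q => (S - t) ^ (-α) * (K - q)) (-(S - t) ^ (-α)) q := by
    simpa using ((hasDerivAt_id q).const_sub K).const_mul ((S - t) ^ (-α))
  refine (laplacian_comp_norm_sub_sq_div hψ (fun _ => hasDerivAt_const _ _) x₀ x (S - t)).trans ?_
  ring

theorem deriv_blowupBarrier_lt {α p K S t : ℝ} {x₀ x : E} (hp : 1 < p) (hα : α * (p - 1) = 1)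
    (hK : 2 * finrank ℝ E + (α + 1) ^ α < K) (htS : t < S)
    (hnonneg : 0 ≤ blowupBarrier α K S x₀ x t) :
    deriv (blowupBarrier α K S x₀ x) t <
      (Δ fun y => blowupBarrier α K S x₀ y t) x + blowupBarrier α K S x₀ x t ^ p := by
  have hd : 0 < S - t := sub_pos.2 htS
  have hA : 0 < (S - t) ^ (-α) := rpow_pos_of_pos hd _
  have hprofile : 0 ≤ K - ‖x - x₀‖ ^ 2 / (S - t) := nonneg_of_mul_nonneg_right hnonneg hA
  have hyoung := add_one_mul_le_rpow_add hp hα hprofile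
  rw [(hasDerivAt_blowupBarrier α K x₀ x htS).deriv, laplacian_blowupBarrier, blowupBarrier,
    mul_rpow hA.le hprofile, rpow_neg_rpow_eq_div hα hd]
  set q := ‖x - x₀‖ ^ 2 / (S - t)
  calc (S - t) ^ (-α) / (S - t) * (α * K - (α + 1) * q)
      < (S - t) ^ (-α) / (S - t) * (-(2 * finrank ℝ E) + (K - q) ^ p) := by
        gcongr
        linarith
    _ = _ := by ring

theorem isBarrier_blowupBarrier {α p K S a b : ℝ} (hp : 1 < p) (hα : α * (p - 1) = 1)
    (hK : 2 * finrank ℝ E + (α + 1) ^ α < K) (hbS : b < S) (x₀ : E) :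
    IsBarrier p a b (blowupBarrier α K S x₀) where
  continuousOn := by
    have hd (q : E × ℝ) (hq : q ∈ univ ×ˢ Icc a b) : S - q.2 ≠ 0 := by linarith [hq.2.2]
    exact (ContinuousOn.rpow_const (by fun_prop) fun q hq => .inl (hd q hq)).mul
      (continuousOn_const.sub (ContinuousOn.div (by fun_prop) (by fun_prop) hd))
  contDiff_space t _ := by
    have : ContDiff ℝ 2 fun x => ‖x - x₀‖ ^ 2 := (contDiff_id.sub contDiff_const).norm_sq ℝ
    unfold blowupBarrier
    fun_prop
  differentiableAt_time t ht x :=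
    (hasDerivAt_blowupBarrier α K x₀ x (ht.2.trans_lt hbS)).differentiableAt
  isBounded := by
    refine (isBounded_setOf_norm_sub_sq_le x₀ (K * (S - a))).subset ?_
    rintro x ⟨t, ht, hw⟩
    have hd : 0 < S - t := by linarith [ht.2]
    have hq : ‖x - x₀‖ ^ 2 / (S - t) ≤ K :=
      sub_nonneg.1 (nonneg_of_mul_nonneg_right hw (rpow_pos_of_pos hd _))
    have hK0 : 0 ≤ K := le_trans (by positivity) hq
    calc ‖x - x₀‖ ^ 2 ≤ K * (S - t) := (div_le_iff₀ hd).1 hq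
      _ ≤ K * (S - a) := by gcongr; exact ht.1
  deriv_lt_laplacian_add_rpow t ht x hnonneg :=
    deriv_blowupBarrier_lt hp hα hK (ht.2.trans_lt hbS) hnonneg

theorem IsNonnegSupersolution.not_forall_blowupBarrier_lt {α p K S a : ℝ} {u : E → ℝ → ℝ}
    (hu : IsNonnegSupersolution p u) (hp : 1 < p) (hα : α * (p - 1) = 1)
    (hK : 2 * finrank ℝ E + (α + 1) ^ α < K) (ha : 0 < a) (haS : a < S) (x₀ : E) :
    ¬ ∀ x, blowupBarrier α K S x₀ x a < u x a := by
  intro hinit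
  have hα0 : 0 < α := pos_of_mul_pos_left (one_pos.trans_eq hα.symm) (sub_pos.2 hp).le
  have hK0 : 0 < K := lt_of_le_of_lt (by positivity) hK
  have hlower : ∀ t ∈ Ico a S, (S - t) ^ (-α) * K < u x₀ t := fun t ht => by
    simpa [blowupBarrier] using
      hu.barrier_lt (isBarrier_blowupBarrier hp hα hK ht.2 x₀) ha hinit t ⟨ht.1, le_rfl⟩ x₀
  have htop : Tendsto (fun t => (S - t) ^ (-α) * K) (𝓝[<] S) atTop := by
    have hsub : Tendsto (fun t => S - t) (𝓝[<] S) (𝓝[>] 0) := by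
      refine tendsto_nhdsWithin_iff.2 ⟨Tendsto.mono_left ?_ nhdsWithin_le_nhds, ?_⟩
      · exact Continuous.tendsto' (by fun_prop) _ _ (sub_self S)
      · filter_upwards [self_mem_nhdsWithin] with t ht using sub_pos.2 (mem_Iio.1 ht)
    exact ((tendsto_rpow_neg_nhdsGT_zero (neg_neg_of_pos hα0)).comp hsub).atTop_mul_const hK0
  have hlimit : Tendsto (u x₀) (𝓝[<] S) (𝓝 (u x₀ S)) := by
    have hcont := (hu.differentiableAt_time x₀ S (ha.trans haS)).continuousAt
    exact hcont.tendsto.mono_left nhdsWithin_le_nhds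
  refine not_tendsto_nhds_of_tendsto_atTop (tendsto_atTop_mono' _ ?_ htop) _ hlimit
  filter_upwards [Ico_mem_nhdsLT haS] with t ht using (hlower t ht).le

end Blowup

section Gaussian

-- With `N = 2 (n + 2)`, the left side is what the amplitude correction `b log t - b q²` costs in
-- the heat equation. It is negative for `q ≥ N + 1`; for smaller `q` the amplitude is at least
-- `η / 2`.
theorem profile_correction_lt {p N b η η' q : ℝ} (hp : 1 < p) (hN : 0 ≤ N) (hη : η ∈ Ioc 0 1)
    (hb : 0 < b) (hbη : b * (N + 1) ^ 2 < exp (-(p - 1) * (N + 1) / 4) * (η / 2) ^ p)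
    (hη' : η ≤ η') (hq : 0 ≤ q) (hprofile : 0 ≤ η' - b * q ^ 2) :
    b - 2 * b * q * (q - N) < exp (-(p - 1) * q / 4) * (η' - b * q ^ 2) ^ p := by
  have hη0 : 0 < η := hη.1
  have hp0 : 0 < p - 1 := sub_pos.2 hp
  rcases le_or_gt (N + 1) q with hqN | hqN
  · have hone : 1 ≤ q * (q - N) := by nlinarith
    calc b - 2 * b * q * (q - N) < 0 := by nlinarith
      _ ≤ _ := by positivity
  · have hsmall : b * (N + 1) ^ 2 < η / 2 :=
      calc b * (N + 1) ^ 2 < exp (-(p - 1) * (N + 1) / 4) * (η / 2) ^ p := hbη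
        _ ≤ 1 * (η / 2) ^ (1 : ℝ) := by
          gcongr ?_ * ?_
          · exact exp_le_one_iff.2 (by linarith [mul_nonneg hp0.le hN])
          · exact rpow_le_rpow_of_exponent_ge (by positivity) (by linarith [hη.2]) hp.le
        _ = η / 2 := by simp
    have hhalf : η / 2 ≤ η' - b * q ^ 2 := by
      have : b * q ^ 2 ≤ b * (N + 1) ^ 2 := by gcongr
      linarith
    calc b - 2 * b * q * (q - N) ≤ b * (N + 1) ^ 2 := by
          nlinarith [sq_nonneg (q - N), sq_nonneg q, mul_nonneg hb.le hN]
      _ < exp (-(p - 1) * (N + 1) / 4) * (η / 2) ^ p := hbη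
      _ ≤ exp (-(p - 1) * q / 4) * (η' - b * q ^ 2) ^ p := by
        gcongr ?_ * ?_ ^ p
        exact exp_le_exp.2 (by linarith [mul_le_mul_of_nonneg_left hqN.le hp0.le])

variable {E : Type*} [NormedAddCommGroup E]

/-- The forward comparison function `t^(-α) exp(-q / 4) (η + b log (t / a) - b q²)` in the
self-similar variable `q = |x - x₀|² / t`: a Gaussian whose amplitude grows logarithmically. The
term `-b q²` makes it positive in a bounded region only. -/
noncomputable def gaussianBarrier (α a η b : ℝ) (x₀ x : E) (t : ℝ) : ℝ :=
  t ^ (-α) * exp (-(‖x - x₀‖ ^ 2 / t) / 4) *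
    (η + b * log (t / a) - b * (‖x - x₀‖ ^ 2 / t) ^ 2)

theorem hasDerivAt_gaussianBarrier {a t : ℝ} (α η b : ℝ) (x₀ x : E) (ha : 0 < a) (ht : 0 < t) :
    HasDerivAt (gaussianBarrier α a η b x₀ x)
      (t ^ (-α) * exp (-(‖x - x₀‖ ^ 2 / t) / 4) / t *
        ((‖x - x₀‖ ^ 2 / t / 4 - α) * (η + b * log (t / a) - b * (‖x - x₀‖ ^ 2 / t) ^ 2) + b +
          2 * b * (‖x - x₀‖ ^ 2 / t) ^ 2)) t := by
  have hq : HasDerivAt (fun t => ‖x - x₀‖ ^ 2 / t) (-‖x - x₀‖ ^ 2 / t ^ 2) t :=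
    ((hasDerivAt_const t _).div (hasDerivAt_id t) ht.ne').congr_deriv (by simp)
  have hlog : HasDerivAt (fun t => log (t / a)) (1 / t) t :=
    (((hasDerivAt_id t).div_const a).log (div_pos ht ha).ne').congr_deriv (by rw [id]; field_simp)
  refine (((hasDerivAt_rpow_const (p := -α) (.inl ht.ne')).mul (hq.neg.div_const 4).exp).mul
    (((hlog.const_mul b).const_add η).sub ((hq.pow 2).const_mul b))).congr_deriv ?_
  rw [rpow_sub_one ht.ne']
  simp only [Pi.neg_apply, Pi.mul_apply, Pi.sub_apply, Pi.pow_apply, Nat.cast_ofNat,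
    Nat.add_one_sub_one, pow_one]
  field_simp
  ring

theorem gaussianBarrier_initial_le {α a η b : ℝ} (ha : 0 < a) (hη : 0 ≤ η) (hb : 0 ≤ b)
    (x₀ x : E) : gaussianBarrier α a η b x₀ x a ≤ a ^ (-α) * η := by
  have hexp : exp (-(‖x - x₀‖ ^ 2 / a) / 4) ≤ 1 := by
    rw [exp_le_one_iff, neg_div]
    exact neg_nonpos.2 (by positivity)
  calc gaussianBarrier α a η b x₀ x a
      = a ^ (-α) * exp (-(‖x - x₀‖ ^ 2 / a) / 4) * (η - b * (‖x - x₀‖ ^ 2 / a) ^ 2) := by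
        simp [gaussianBarrier, div_self ha.ne']
    _ ≤ a ^ (-α) * exp (-(‖x - x₀‖ ^ 2 / a) / 4) * η := by
        gcongr
        exact sub_le_self η (by positivity)
    _ ≤ a ^ (-α) * 1 * η := by gcongr
    _ = _ := by rw [mul_one]

theorem gaussianBarrier_initial_neg {α a η b : ℝ} {x₀ x : E} (ha : 0 < a)
    (hη : η < b * (‖x - x₀‖ ^ 2 / a) ^ 2) : gaussianBarrier α a η b x₀ x a < 0 := by
  refine mul_neg_of_pos_of_neg (by positivity) ?_
  simpa [div_self ha.ne'] using hη

theorem isBounded_setOf_gaussianBarrier_nonneg {α a η b T : ℝ} (ha : 0 < a) (hb : 0 < b)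
    (x₀ : E) :
    Bornology.IsBounded {x | ∃ t ∈ Icc a T, 0 ≤ gaussianBarrier α a η b x₀ x t} := by
  set M := (η + b * log (T / a)) / b
  refine (isBounded_setOf_norm_sub_sq_le x₀ ((M + 1) * T)).subset ?_
  rintro x ⟨t, ht, hnonneg⟩
  have ht0 : 0 < t := ha.trans_le ht.1
  have hprofile : 0 ≤ η + b * log (t / a) - b * (‖x - x₀‖ ^ 2 / t) ^ 2 :=
    nonneg_of_mul_nonneg_right hnonneg (by positivity)
  have hsq : (‖x - x₀‖ ^ 2 / t) ^ 2 ≤ M := by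
    have hlog : b * log (t / a) ≤ b * log (T / a) := by gcongr; exact ht.2
    rw [le_div_iff₀ hb]
    linarith
  have hq : ‖x - x₀‖ ^ 2 / t ≤ M + 1 := by
    nlinarith [sq_nonneg (‖x - x₀‖ ^ 2 / t - 1)]
  calc ‖x - x₀‖ ^ 2 ≤ (M + 1) * t := (div_le_iff₀ ht0).1 hq
    _ ≤ (M + 1) * T := by
      gcongr
      · exact le_trans (by positivity) hq
      · exact ht.2

theorem exists_blowupBarrier_le_gaussianBarrier {a η b : ℝ} (α K : ℝ) (ha : 0 < a) (hη : 0 ≤ η)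
    (hb : 0 < b) (x₀ : E) :
    ∃ T ≥ a, ∀ x, 0 ≤ blowupBarrier α K (2 * T) x₀ x T →
      blowupBarrier α K (2 * T) x₀ x T ≤ gaussianBarrier α a η b x₀ x T := by
  obtain ⟨T, hT, haT⟩ : ∃ T, K * exp (K / 4) / b + K ^ 2 ≤ log (T / a) ∧ a ≤ T :=
    (((tendsto_log_atTop.comp (tendsto_id.atTop_div_const ha)).eventually_ge_atTop _).and
      (eventually_ge_atTop a)).exists
  have hT0 : 0 < T := ha.trans_le haT
  refine ⟨T, haT, fun x hx => ?_⟩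
  have hdiff : 2 * T - T = T := by ring
  rw [blowupBarrier, hdiff] at hx ⊢
  rw [gaussianBarrier, mul_assoc]
  have hq : 0 ≤ ‖x - x₀‖ ^ 2 / T := by positivity
  have hqK : ‖x - x₀‖ ^ 2 / T ≤ K :=
    sub_nonneg.1 (nonneg_of_mul_nonneg_right hx (rpow_pos_of_pos hT0 _))
  set q := ‖x - x₀‖ ^ 2 / T
  have hK : 0 ≤ K := hq.trans hqK
  have hamplitude : K * exp (K / 4) ≤ η + b * log (T / a) - b * q ^ 2 := by
    have hlog : K * exp (K / 4) + b * K ^ 2 ≤ b * log (T / a) := by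
      calc _ = b * (K * exp (K / 4) / b + K ^ 2) := by field_simp
        _ ≤ _ := by gcongr
    have : b * q ^ 2 ≤ b * K ^ 2 := by gcongr
    linarith
  gcongr
  calc K - q ≤ K := sub_le_self K hq
    _ = exp (-K / 4) * (K * exp (K / 4)) := by
      rw [mul_left_comm, ← exp_add, neg_div, neg_add_cancel, exp_zero, mul_one]
    _ ≤ exp (-q / 4) * (η + b * log (T / a) - b * q ^ 2) := by gcongr

variable [InnerProductSpace ℝ E] [FiniteDimensional ℝ E]

theorem laplacian_gaussianBarrier (α a η b t : ℝ) (x₀ x : E) :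
    (Δ fun y => gaussianBarrier α a η b x₀ y t) x =
      t ^ (-α) * exp (-(‖x - x₀‖ ^ 2 / t) / 4) / t *
        ((‖x - x₀‖ ^ 2 / t / 4 - finrank ℝ E / 2) *
            (η + b * log (t / a) - b * (‖x - x₀‖ ^ 2 / t) ^ 2) +
          4 * b * (‖x - x₀‖ ^ 2 / t) * (‖x - x₀‖ ^ 2 / t - (finrank ℝ E + 2))) := by
  set A := t ^ (-α)
  set H : ℝ → ℝ := fun q => η + b * log (t / a) - b * q ^ 2
  have hexp (q : ℝ) :
      HasDerivAt (fun q : ℝ => A * exp (-q / 4)) (-(1 / 4) * (A * exp (-q / 4))) q :=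
    (((hasDerivAt_id q).neg.div_const 4).exp.const_mul A).congr_deriv
      (by simp only [Pi.neg_apply, id_eq]; ring)
  have hHd (q : ℝ) : HasDerivAt H (-(2 * b * q)) q :=
    (((hasDerivAt_id q).pow 2).const_mul b |>.const_sub _).congr_deriv
      (by simp only [Nat.cast_ofNat, id_eq, Nat.add_one_sub_one, pow_one, mul_one]; ring)
  have hψ (q : ℝ) : HasDerivAt (fun q => A * exp (-q / 4) * H q)
      (A * exp (-q / 4) * (-(1 / 4) * H q - 2 * b * q)) q :=
    ((hexp q).mul (hHd q)).congr_deriv (by ring)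
  have hψ' (q : ℝ) : HasDerivAt (fun q => A * exp (-q / 4) * (-(1 / 4) * H q - 2 * b * q))
      (A * exp (-q / 4) * (1 / 16 * H q + b * q - 2 * b)) q :=
    ((hexp q).mul (((hHd q).const_mul _).sub ((hasDerivAt_id q).const_mul (2 * b)))).congr_deriv
      (by simp only [id_eq, Pi.sub_apply]; ring)
  refine (laplacian_comp_norm_sub_sq_div hψ hψ' x₀ x t).trans ?_
  ring

theorem deriv_gaussianBarrier_lt {α p a η b t : ℝ} {x₀ x : E} (hp : 1 < p)
    (hα : α * (p - 1) = 1) (hE : finrank ℝ E ≤ 2 * α) (ha : 0 < a) (hη : η ∈ Ioc 0 1)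
    (hb : 0 < b)
    (hbη : b * (2 * (finrank ℝ E + 2) + 1) ^ 2 <
      exp (-(p - 1) * (2 * (finrank ℝ E + 2) + 1) / 4) * (η / 2) ^ p)
    (hat : a ≤ t) (hnonneg : 0 ≤ gaussianBarrier α a η b x₀ x t) :
    deriv (gaussianBarrier α a η b x₀ x) t <
      (Δ fun y => gaussianBarrier α a η b x₀ y t) x + gaussianBarrier α a η b x₀ x t ^ p := by
  have ht : 0 < t := ha.trans_le hat
  have hA : 0 < t ^ (-α) := by positivity
  have hprofile : 0 ≤ η + b * log (t / a) - b * (‖x - x₀‖ ^ 2 / t) ^ 2 :=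
    nonneg_of_mul_nonneg_right hnonneg (by positivity)
  have hamplitude : η ≤ η + b * log (t / a) :=
    le_add_of_nonneg_right (mul_nonneg hb.le (log_nonneg ((one_le_div ha).2 hat)))
  have hcorrection := profile_correction_lt hp (by positivity) hη hb hbη hamplitude
    (q := ‖x - x₀‖ ^ 2 / t) (by positivity) hprofile
  rw [(hasDerivAt_gaussianBarrier α η b x₀ x ha ht).deriv, laplacian_gaussianBarrier,
    gaussianBarrier, mul_rpow (by positivity) hprofile, mul_rpow hA.le (exp_pos _).le,
    rpow_neg_rpow_eq_div hα ht, ← exp_mul]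
  set q := ‖x - x₀‖ ^ 2 / t
  set H := η + b * log (t / a) - b * q ^ 2
  have hexp : exp (-q / 4 * p) = exp (-q / 4) * exp (-(p - 1) * q / 4) := by
    rw [← exp_add]
    ring_nf
  have hcritical : finrank ℝ E * H ≤ 2 * α * H := by gcongr
  calc t ^ (-α) * exp (-q / 4) / t * ((q / 4 - α) * H + b + 2 * b * q ^ 2)
      < t ^ (-α) * exp (-q / 4) / t * ((q / 4 - finrank ℝ E / 2) * H +
          4 * b * q * (q - (finrank ℝ E + 2)) + exp (-(p - 1) * q / 4) * H ^ p) := by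
        gcongr ?_ * ?_
        linarith
    _ = _ := by rw [hexp]; ring

theorem isBarrier_gaussianBarrier {α p a η b : ℝ} (hp : 1 < p) (hα : α * (p - 1) = 1)
    (hE : finrank ℝ E ≤ 2 * α) (ha : 0 < a) (hη : η ∈ Ioc 0 1) (hb : 0 < b)
    (hbη : b * (2 * (finrank ℝ E + 2) + 1) ^ 2 <
      exp (-(p - 1) * (2 * (finrank ℝ E + 2) + 1) / 4) * (η / 2) ^ p) (T : ℝ) (x₀ : E) :
    IsBarrier p a T (gaussianBarrier α a η b x₀) where
  continuousOn := by
    have ht (q : E × ℝ) (hq : q ∈ univ ×ˢ Icc a T) : 0 < q.2 := ha.trans_le hq.2.1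
    have hpow : ContinuousOn (fun q : E × ℝ => q.2 ^ (-α)) (univ ×ˢ Icc a T) :=
      .rpow_const (by fun_prop) fun q hq => .inl (ht q hq).ne'
    have hlog : ContinuousOn (fun q : E × ℝ => log (q.2 / a)) (univ ×ˢ Icc a T) :=
      .log (by fun_prop) fun q hq => (div_pos (ht q hq) ha).ne'
    have hvar : ContinuousOn (fun q : E × ℝ => ‖q.1 - x₀‖ ^ 2 / q.2) (univ ×ˢ Icc a T) :=
      .div (by fun_prop) (by fun_prop) fun q hq => (ht q hq).ne'
    unfold gaussianBarrier
    fun_prop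
  contDiff_space t _ := by
    have : ContDiff ℝ 2 fun x => ‖x - x₀‖ ^ 2 := (contDiff_id.sub contDiff_const).norm_sq ℝ
    unfold gaussianBarrier
    fun_prop
  differentiableAt_time t ht x :=
    (hasDerivAt_gaussianBarrier α η b x₀ x ha (ha.trans_le ht.1)).differentiableAt
  isBounded := isBounded_setOf_gaussianBarrier_nonneg ha hb x₀
  deriv_lt_laplacian_add_rpow t ht x hnonneg :=
    deriv_gaussianBarrier_lt hp hα hE ha hη hb hbη ht.1 hnonneg

theorem IsNonnegSupersolution.exists_gaussianBarrier_initial_lt {α p A : ℝ} {u : E → ℝ → ℝ}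
    {x₀ : E} (hu : IsNonnegSupersolution p u) (hp : 1 < p) (hα : α * (p - 1) = 1) (hA : 0 < A)
    (hx₀ : 0 < u x₀ 0) :
    ∃ a > 0, ∃ η ∈ Ioc (0 : ℝ) 1, ∀ x, gaussianBarrier α a η (A * η ^ p) x₀ x a < u x a := by
  obtain ⟨c, hc0, hc⟩ := exists_between (lt_min one_pos hx₀)
  obtain ⟨hc1, hcu⟩ := lt_min_iff.1 hc
  obtain ⟨ρ, hρ, hball⟩ : ∃ ρ > 0, ∀ x t, 0 ≤ t → ‖x - x₀‖ < ρ → t < ρ → c < u x t := by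
    have hnear := (hu.continuousOn (x₀, 0) (by simp)).eventually (lt_mem_nhds hcu)
    obtain ⟨ρ, hρ, hball⟩ := Metric.mem_nhdsWithin_iff.1 hnear
    refine ⟨ρ, hρ, fun x t ht hx htρ => hball (a := (x, t)) ⟨?_, ht⟩⟩
    simpa [Prod.dist_eq, dist_eq_norm, abs_of_nonneg ht] using ⟨hx, htρ⟩
  have hbound : 0 < A * c ^ (p - 1) * ρ ^ 4 := by positivity
  obtain ⟨a, ha, ha'⟩ := exists_between (lt_min one_pos (lt_min hρ hbound))
  obtain ⟨ha1, haρ, haA⟩ := by simpa only [lt_min_iff] using ha'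
  have hα0 : 0 < α := pos_of_mul_pos_left (one_pos.trans_eq hα.symm) (sub_pos.2 hp).le
  have hη : 0 < c * a ^ α := by positivity
  refine ⟨a, ha, c * a ^ α, ⟨hη, ?_⟩, fun x => ?_⟩
  · exact mul_le_one₀ hc1.le (by positivity) (rpow_le_one ha.le ha1.le hα0.le)
  rcases lt_or_ge ‖x - x₀‖ ρ with hx | hx
  · calc gaussianBarrier α a (c * a ^ α) (A * (c * a ^ α) ^ p) x₀ x a
        ≤ a ^ (-α) * (c * a ^ α) := gaussianBarrier_initial_le ha hη.le (by positivity) x₀ x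
      _ = c := by rw [mul_left_comm, ← rpow_add ha]; simp
      _ < u x a := hball x a ha.le hx haρ
  · refine (gaussianBarrier_initial_neg ha ?_).trans_le (hu.nonneg x a ha.le)
    have hpow : (c * a ^ α) ^ p = c * a ^ α * (c ^ (p - 1) * a) := by
      calc (c * a ^ α) ^ p = c * a ^ α * (c * a ^ α) ^ (p - 1) := by
            rw [← rpow_one_add' hη.le (by linarith)]; ring_nf
        _ = _ := by rw [mul_rpow hc0.le (by positivity), ← rpow_mul ha.le, hα, rpow_one]
    calc c * a ^ α = c * a ^ α * (a / a) := by field_simp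
      _ < c * a ^ α * (A * c ^ (p - 1) * ‖x - x₀‖ ^ 4 / a) := by
        gcongr
        exact haA.trans_le (by gcongr)
      _ = A * (c * a ^ α) ^ p * (‖x - x₀‖ ^ 2 / a) ^ 2 := by
        rw [hpow]
        field_simp

theorem IsNonnegSupersolution.exists_gaussianBarrier_lt {α p : ℝ} {u : E → ℝ → ℝ} {x₀ : E}
    (hu : IsNonnegSupersolution p u) (hp : 1 < p) (hα : α * (p - 1) = 1)
    (hE : finrank ℝ E ≤ 2 * α) (hx₀ : 0 < u x₀ 0) :
    ∃ a > 0, ∃ η > 0, ∃ b > 0, ∀ t ≥ a, ∀ x, gaussianBarrier α a η b x₀ x t < u x t := by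
  set N : ℝ := 2 * (finrank ℝ E + 2)
  have : 0 < N := by positivity
  obtain ⟨A, hA0, hA⟩ : ∃ A, 0 < A ∧ A < exp (-(p - 1) * (N + 1) / 4) * (1 / 2) ^ p / (N + 1) ^ 2 :=
    exists_between (by positivity)
  obtain ⟨a, ha, η, hη, hinit⟩ := hu.exists_gaussianBarrier_initial_lt hp hα hA0 hx₀
  have hη0 : 0 < η := hη.1
  have hb : 0 < A * η ^ p := by positivity
  have hbη : A * η ^ p * (N + 1) ^ 2 < exp (-(p - 1) * (N + 1) / 4) * (η / 2) ^ p := by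
    calc A * η ^ p * (N + 1) ^ 2 = A * (N + 1) ^ 2 * η ^ p := by ring
      _ < exp (-(p - 1) * (N + 1) / 4) * (1 / 2) ^ p * η ^ p := by
        gcongr ?_ * η ^ p
        exact (lt_div_iff₀ (by positivity)).1 hA
      _ = _ := by rw [mul_assoc, ← mul_rpow (by norm_num) hη0.le, one_div_mul_eq_div]
  exact ⟨a, ha, η, hη0, A * η ^ p, hb, fun t ht =>
    hu.barrier_lt (isBarrier_gaussianBarrier hp hα hE ha hη hb hbη t x₀) ha hinit t ⟨ht, le_rfl⟩⟩

end Gaussian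

theorem no_nonneg_solution_subcritical_general {E : Type*} [NormedAddCommGroup E]
    [InnerProductSpace ℝ E] [FiniteDimensional ℝ E] {p : ℝ} (hp : 1 < p)
    (hE : finrank ℝ E * (p - 1) ≤ 2) {u : E → ℝ → ℝ} (hu : IsNonnegSupersolution p u) (x₀ : E) :
    u x₀ 0 = 0 := by
  by_contra hne
  have hx₀ : 0 < u x₀ 0 := (hu.nonneg x₀ 0 le_rfl).lt_of_ne' hne
  have hp0 : 0 < p - 1 := sub_pos.2 hp
  obtain ⟨α, hα⟩ : ∃ α, α * (p - 1) = 1 := ⟨(p - 1)⁻¹, inv_mul_cancel₀ hp0.ne'⟩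
  have hE' : finrank ℝ E ≤ 2 * α := le_of_mul_le_mul_right (by linarith) hp0
  obtain ⟨a, ha, η, hη, b, hb, hlower⟩ := hu.exists_gaussianBarrier_lt hp hα hE' hx₀
  obtain ⟨K, hK⟩ := exists_gt (2 * finrank ℝ E + (α + 1) ^ α)
  obtain ⟨T, haT, hle⟩ := exists_blowupBarrier_le_gaussianBarrier α K ha hη.le hb x₀
  have hT : 0 < T := ha.trans_le haT
  refine hu.not_forall_blowupBarrier_lt hp hα hK hT (lt_two_mul_self hT) x₀ fun x => ?_
  rcases lt_or_ge (blowupBarrier α K (2 * T) x₀ x T) 0 with hneg | hnonneg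
  · exact hneg.trans_le (hu.nonneg x T hT.le)
  · exact (hle x hnonneg).trans_lt (hlower T haT x)

/-- Euclidean specialization of part (a) of the main theorem: for `1 < p ≤ 1 + 2/n`, the
semilinear heat equation `Δu - ∂ₜ u + u^p = 0` on `ℝⁿ × (0,∞)` has no nonnegative classical
solution with nonnegative, not identically zero initial data. -/
theorem no_nonneg_solution_subcritical (n : ℕ) (hn : 1 ≤ n) (p : ℝ)
    (hp1 : 1 < p) (hp2 : p ≤ 1 + 2 / (n : ℝ)) :
    ¬ ∃ u : EuclideanSpace ℝ (Fin n) → ℝ → ℝ,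
      -- continuity on ℝⁿ × [0,∞)
      ContinuousOn (fun q : EuclideanSpace ℝ (Fin n) × ℝ => u q.1 q.2) {q | 0 ≤ q.2} ∧
      -- twice continuously differentiable in x on ℝⁿ × (0,∞)
      (∀ t : ℝ, 0 < t → ContDiff ℝ 2 (fun x => u x t)) ∧
      -- once continuously differentiable in t on ℝⁿ × (0,∞)
      (∀ x : EuclideanSpace ℝ (Fin n), ContDiffOn ℝ 1 (u x) (Set.Ioi (0 : ℝ))) ∧
      -- nonnegativity
      (∀ x : EuclideanSpace ℝ (Fin n), ∀ t : ℝ, 0 ≤ t → 0 ≤ u x t) ∧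
      -- the equation Δu - ∂ₜu + u^p = 0 on ℝⁿ × (0,∞)
      (∀ x : EuclideanSpace ℝ (Fin n), ∀ t : ℝ, 0 < t →
        laplacian (fun y => u y t) x - deriv (u x) t + u x t ^ p = 0) ∧
      -- the initial value u₀ = u(·,0) is not identically zero
      (∃ x : EuclideanSpace ℝ (Fin n), u x 0 ≠ 0) := by
  rintro ⟨u, hcont, hspace, htime, hnonneg, heq, x₀, hx₀⟩
  simp only [laplacian_eq_innerProductSpace_laplacian] at heq
  have hE : finrank ℝ (EuclideanSpace ℝ (Fin n)) * (p - 1) ≤ 2 := by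
    rw [finrank_euclideanSpace_fin, mul_comm, ← le_div_iff₀ (by positivity)]
    linarith
  exact hx₀ (no_nonneg_solution_subcritical_general hp1 hE
    (.of_laplacian_sub_deriv_add_rpow_eq_zero hcont hspace
      (fun x => (htime x).differentiableOn_one) hnonneg heq) x₀)
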